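/- Fix R₁ ≥ 2 and R₂ ≥ 30·R₁. There exists a constant G > 0 (depending only on R₁ and R₂, not on n or T) such that for all n ≥ 10 and T ≥ 2, the function f̄^{sg}(x,z;ȳ) = -Ψ(1)Φ(x₁) + Σ_{i=2}^{T}[Ψ(-z_i)Φ(-x_i) - Ψ(z_i)Φ(x_i)] + Σ_{i=1}^{T-1} h^{sg}(x_i, z_{i+1}; ȳ^{(i)}) + Σ_{i=1}^{T-1}[c₁·x_i² + c₂·z_{i+1}²] satisfies ‖∇f̄^{sg}(x,z;ȳ)‖_∞ ≤ G at every point with ‖x‖_∞ ≤ R₁, ‖z‖_∞ ≤ R₁, and ‖ȳ^{(i)}‖_∞ ≤ n·R₂ for all i. -/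

import Mathlib

open Matrix

/-- `Ψ(x) = 0` for `x ≤ 1/2`, `exp(1 - 1/(2x-1)²)` for `x > 1/2`. -/
noncomputable def Psi (x : ℝ) : ℝ :=
  if x ≤ 1 / 2 then 0 else Real.exp (1 - 1 / (2 * x - 1) ^ 2)

/-- `Φ(x) = √e · ∫_{-∞}^x e^{-t²/2} dt`. -/
noncomputable def Phi (x : ℝ) : ℝ :=
  Real.sqrt (Real.exp 1) * ∫ t in Set.Iic x, Real.exp (-t ^ 2 / 2)

/-- The `n × n` tridiagonal matrix with `A 1 1 = A n n = 1`, diagonal `2` otherwise,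
off-diagonal entries `-1`, and all other entries `0` (0-indexed in Lean). -/
noncomputable def triA (n : ℕ) : Matrix (Fin n) (Fin n) ℝ :=
  Matrix.of fun i j =>
    if i = j then (if (i : ℕ) = 0 ∨ (i : ℕ) = n - 1 then 1 else 2)
    else if (i : ℕ) + 1 = (j : ℕ) ∨ (j : ℕ) + 1 = (i : ℕ) then -1 else 0

/-- `B = (α I + A)⁻¹`. -/
noncomputable def Bmat (n : ℕ) (α : ℝ) : Matrix (Fin n) (Fin n) ℝ :=
  (α • (1 : Matrix (Fin n) (Fin n) ℝ) + triA n)⁻¹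

/-- `b_{x,z} = x·e₁ - (1/2)·z·eₙ`. -/
noncomputable def bvec (n : ℕ) (x z : ℝ) : Fin n → ℝ := fun i =>
  if (i : ℕ) = 0 then x else if (i : ℕ) = n - 1 then -(1 / 2) * z else 0

/-- `h^{sg}(x, z; y) = (C/n)·[-(1/2)·yᵀ((1/n²)I + A)y + b_{x,z}ᵀ y]`. -/
noncomputable def hsg (n : ℕ) (C x z : ℝ) (y : Fin n → ℝ) : ℝ :=
  (C / n) * (-(1 / 2) * (y ⬝ᵥ ((((n : ℝ) ^ 2)⁻¹ • (1 : Matrix (Fin n) (Fin n) ℝ)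
      + triA n).mulVec y)) + bvec n x z ⬝ᵥ y)

/-- The unscaled stochastic hard instance `f̄^{nc-sc-sg}` on the Euclidean space
`ℝ^T × ℝ^{T-1} × ℝ^{n(T-1)}`. `Sum.inl j` is `x_{j+1}`, `Sum.inr (Sum.inl j)` is
`z_{j+2}`, and `Sum.inr (Sum.inr (j, k))` is coordinate `k+1` of `ȳ^{(j+1)}`. -/
noncomputable def fbarSgE (n T : ℕ) (hn : 0 < n) (hT : 2 ≤ T) (C c1 c2 : ℝ)
    (w : EuclideanSpace ℝ (Fin T ⊕ (Fin (T - 1) ⊕ Fin (T - 1) × Fin n))) : ℝ :=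
  -Psi 1 * Phi (w (Sum.inl ⟨0, by omega⟩))
    + ∑ j : Fin (T - 1),
        (Psi (-w (Sum.inr (Sum.inl j)))
            * Phi (-w (Sum.inl ⟨(j : ℕ) + 1, by have := j.isLt; omega⟩))
          - Psi (w (Sum.inr (Sum.inl j)))
            * Phi (w (Sum.inl ⟨(j : ℕ) + 1, by have := j.isLt; omega⟩)))
    + ∑ j : Fin (T - 1),
        hsg n C (w (Sum.inl ⟨(j : ℕ), by have := j.isLt; omega⟩))
          (w (Sum.inr (Sum.inl j))) (fun k => w (Sum.inr (Sum.inr (j, k))))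
    + ∑ j : Fin (T - 1),
        (c1 * (w (Sum.inl ⟨(j : ℕ), by have := j.isLt; omega⟩)) ^ 2
          + c2 * (w (Sum.inr (Sum.inl j))) ^ 2)

open MeasureTheory Topology
open scoped Real

/-!
Each summand of `fbarSgE` depends on one `x`-coordinate, one `z`-coordinate and one block of `y`,
and its differential in direction `v` is at most a constant times the `ℓ¹` norm of `v` on these
coordinates. The blocks belonging to different summands of a sum are disjoint, so the bounds add up
to a constant times the `ℓ¹` norm of `v`, whatever `T` is, and `v = eᵢ` gives the `ℓ∞` bound.

Independence of `n` comes from two facts. In `hsg` the prefactor `C / n` compensates for `y` having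
size `n * S`. The constant `C` itself is bounded because the first column of `Bmat` solves a
three-term recurrence whose solution at most doubles over `n - 1` steps when `α = 1 / n ^ 2`.
-/

section PsiPhi

lemma Psi_of_le {x : ℝ} (hx : x ≤ 1 / 2) : Psi x = 0 := if_pos hx

lemma Psi_of_lt {x : ℝ} (hx : 1 / 2 < x) : Psi x = Real.exp (1 - 1 / (2 * x - 1) ^ 2) :=
  if_neg hx.not_ge

lemma abs_Psi_le (x : ℝ) : |Psi x| ≤ 3 := by
  obtain hx | hx := le_or_gt x (1 / 2)
  · simp [Psi_of_le hx]
  · rw [Psi_of_lt hx, Real.abs_exp]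
    have : 0 ≤ 1 / (2 * x - 1) ^ 2 := by positivity
    exact (Real.exp_le_exp.2 (by linarith)).trans Real.exp_one_lt_three.le

lemma exp_one_sub_inv_sq_le {u : ℝ} (hu : 0 < u) :
    Real.exp (1 - 1 / u ^ 2) ≤ Real.exp 1 * u ^ 2 := by
  rw [Real.exp_sub, div_le_iff₀ (Real.exp_pos _), mul_assoc]
  have h : 1 / u ^ 2 ≤ Real.exp (1 / u ^ 2) := by linarith [Real.add_one_le_exp (1 / u ^ 2)]
  have : 1 ≤ u ^ 2 * Real.exp (1 / u ^ 2) := by rwa [div_le_iff₀' (by positivity)] at h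
  exact le_mul_of_one_le_right (Real.exp_pos 1).le this

lemma cube_le_exp_sq (s : ℝ) : s ^ 3 ≤ Real.exp (s ^ 2) := by
  nlinarith [Real.quadratic_le_exp_of_nonneg (sq_nonneg s), sq_nonneg (s - s ^ 2)]

lemma hasDerivAt_Psi_of_le {x : ℝ} (hx : x ≤ 1 / 2) : HasDerivAt Psi 0 x := by
  have quadratic : ∀ y, ‖Psi y‖ ≤ 4 * Real.exp 1 * ‖‖y - x‖ ^ 2‖ := fun y => by
    rw [norm_pow, norm_norm, Real.norm_eq_abs (y - x), sq_abs]
    obtain hy | hy := le_or_gt y (1 / 2)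
    · rw [Psi_of_le hy, norm_zero]
      positivity
    · rw [Psi_of_lt hy, Real.norm_eq_abs, Real.abs_exp]
      calc Real.exp (1 - 1 / (2 * y - 1) ^ 2) ≤ Real.exp 1 * (2 * y - 1) ^ 2 :=
            exp_one_sub_inv_sq_le (by linarith)
        _ ≤ Real.exp 1 * (2 * (y - x)) ^ 2 := by gcongr <;> linarith
        _ = 4 * Real.exp 1 * (y - x) ^ 2 := by ring
  have h : HasFDerivAt Psi (0 : ℝ →L[ℝ] ℝ) x :=
    (Asymptotics.isBigO_of_le' (𝓝 x) quadratic).hasFDerivAt one_lt_two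
  exact h.hasDerivAt

lemma hasDerivAt_Psi_of_lt {x : ℝ} (hx : 1 / 2 < x) :
    HasDerivAt Psi (Real.exp (1 - 1 / (2 * x - 1) ^ 2) * (4 * (1 / (2 * x - 1)) ^ 3)) x := by
  have hu : 2 * x - 1 ≠ 0 := by linarith
  have hlin : HasDerivAt (fun y : ℝ => 2 * y - 1) 2 x := by
    simpa using ((hasDerivAt_id x).const_mul 2).sub_const 1
  have hexp := (((hlin.pow 2).fun_inv (pow_ne_zero 2 hu)).const_sub 1).exp
  refine (hexp.congr_deriv ?_).congr_of_eventuallyEq ?_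
  · simp only [Pi.pow_apply, one_div]
    field_simp
    ring
  · filter_upwards [lt_mem_nhds hx] with y hy
    simp [Psi_of_lt hy]

lemma differentiable_Psi : Differentiable ℝ Psi := fun x =>
  (le_or_gt x (1 / 2)).elim (fun hx => (hasDerivAt_Psi_of_le hx).differentiableAt)
    fun hx => (hasDerivAt_Psi_of_lt hx).differentiableAt

lemma abs_deriv_Psi_le (x : ℝ) : |deriv Psi x| ≤ 12 := by
  obtain hx | hx := le_or_gt x (1 / 2)
  · simp [(hasDerivAt_Psi_of_le hx).deriv]
  · have hs : 0 ≤ 1 / (2 * x - 1) := one_div_nonneg.2 (by linarith)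
    rw [(hasDerivAt_Psi_of_lt hx).deriv, ← _root_.one_div_pow]
    generalize 1 / (2 * x - 1) = s at hs ⊢
    rw [abs_of_nonneg (by positivity), Real.exp_sub, div_mul_eq_mul_div,
      div_le_iff₀ (Real.exp_pos _)]
    calc Real.exp 1 * (4 * s ^ 3) ≤ 3 * (4 * Real.exp (s ^ 2)) := by
          gcongr
          exacts [Real.exp_one_lt_three.le, cube_le_exp_sq s]
      _ = 12 * Real.exp (s ^ 2) := by ring

lemma integrable_exp_neg_sq_div_two : Integrable fun t : ℝ => Real.exp (-t ^ 2 / 2) := by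
  convert integrable_exp_neg_mul_sq (b := 1 / 2) (by norm_num) using 3
  ring

lemma integral_exp_neg_sq_div_two : ∫ t : ℝ, Real.exp (-t ^ 2 / 2) = √(2 * π) := by
  convert integral_gaussian (1 / 2) using 3
  · ring_nf
  · ring

lemma abs_Phi_le (x : ℝ) : |Phi x| ≤ 5 := by
  have hmass : ∫ t in Set.Iic x, Real.exp (-t ^ 2 / 2) ≤ √(2 * π) :=
    integral_exp_neg_sq_div_two ▸ setIntegral_le_integral integrable_exp_neg_sq_div_two
      (.of_forall fun t => (Real.exp_pos _).le)
  rw [Phi, abs_of_nonneg (mul_nonneg (Real.sqrt_nonneg _)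
    (integral_nonneg fun t => (Real.exp_pos _).le))]
  calc √(Real.exp 1) * ∫ t in Set.Iic x, Real.exp (-t ^ 2 / 2)
      ≤ √(Real.exp 1) * √(2 * π) := by gcongr
    _ = √(Real.exp 1 * (2 * π)) := (Real.sqrt_mul (Real.exp_pos 1).le _).symm
    _ ≤ 5 := Real.sqrt_le_iff.2 ⟨by norm_num, by
        nlinarith [Real.exp_one_lt_d9, Real.pi_lt_d2, Real.pi_pos, Real.exp_pos 1]⟩

lemma hasDerivAt_Phi (x : ℝ) : HasDerivAt Phi (√(Real.exp 1) * Real.exp (-x ^ 2 / 2)) x := by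
  have hcont : Continuous fun t : ℝ => Real.exp (-t ^ 2 / 2) := by fun_prop
  have hsplit : Phi = fun y => √(Real.exp 1) * ((∫ t in Set.Iic 0, Real.exp (-t ^ 2 / 2)) +
      ∫ t in (0 : ℝ)..y, Real.exp (-t ^ 2 / 2)) := funext fun y => by
    rw [Phi, ← intervalIntegral.integral_Iic_sub_Iic
      integrable_exp_neg_sq_div_two.integrableOn integrable_exp_neg_sq_div_two.integrableOn,
      add_sub_cancel]
  rw [hsplit]
  exact ((hcont.integral_hasStrictDerivAt 0 x).hasDerivAt.const_add _).const_mul _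

lemma abs_deriv_Phi_le (x : ℝ) : |deriv Phi x| ≤ 2 := by
  rw [(hasDerivAt_Phi x).deriv, abs_mul, Real.abs_exp, abs_of_nonneg (Real.sqrt_nonneg _)]
  have hsqrt : √(Real.exp 1) ≤ 2 :=
    Real.sqrt_le_iff.2 ⟨by norm_num, by linarith [Real.exp_one_lt_three]⟩
  have hexp : Real.exp (-x ^ 2 / 2) ≤ 1 := Real.exp_le_one_iff.2 (by nlinarith [sq_nonneg x])
  calc √(Real.exp 1) * Real.exp (-x ^ 2 / 2) ≤ 2 * 1 := by gcongr
    _ = 2 := mul_one 2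

end PsiPhi

section DerivBounds

variable {E : Type*} [NormedAddCommGroup E] [NormedSpace ℝ E] {f g : E → ℝ} {β γ : E → ℝ} {w : E}

/-- `f` is differentiable at `w`, and its derivative there in each direction `v` is at most `β v` in
absolute value. Keeping the bound as a function of the direction lets the contributions of
different coordinates be added up before a direction is fixed. -/
def DerivBoundedAt (f : E → ℝ) (β : E → ℝ) (w : E) : Prop :=
  DifferentiableAt ℝ f w ∧ ∀ v, |fderiv ℝ f w v| ≤ β v

namespace DerivBoundedAt

lemma nonneg (hf : DerivBoundedAt f β w) (v : E) : 0 ≤ β v := (abs_nonneg _).trans (hf.2 v)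

lemma mono (hf : DerivBoundedAt f β w) (h : ∀ v, β v ≤ γ v) : DerivBoundedAt f γ w :=
  ⟨hf.1, fun v => (hf.2 v).trans (h v)⟩

lemma neg (hf : DerivBoundedAt f β w) : DerivBoundedAt (fun u => -f u) β w :=
  ⟨hf.1.fun_neg, fun v => by simpa [fderiv_fun_neg] using hf.2 v⟩

lemma add (hf : DerivBoundedAt f β w) (hg : DerivBoundedAt g γ w) :
    DerivBoundedAt (fun u => f u + g u) (fun v => β v + γ v) w :=
  ⟨hf.1.fun_add hg.1, fun v => by
    rw [fderiv_fun_add hf.1 hg.1, _root_.add_apply]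
    exact (abs_add_le _ _).trans (add_le_add (hf.2 v) (hg.2 v))⟩

lemma sub (hf : DerivBoundedAt f β w) (hg : DerivBoundedAt g γ w) :
    DerivBoundedAt (fun u => f u - g u) (fun v => β v + γ v) w := by
  simpa only [sub_eq_add_neg] using hf.add hg.neg

lemma const_mul (hf : DerivBoundedAt f β w) (c : ℝ) :
    DerivBoundedAt (fun u => c * f u) (fun v => |c| * β v) w :=
  ⟨hf.1.const_mul c, fun v => by
    rw [fderiv_const_mul hf.1, _root_.smul_apply, smul_eq_mul, abs_mul]
    exact mul_le_mul_of_nonneg_left (hf.2 v) (abs_nonneg c)⟩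

lemma mul {a b : ℝ} (hf : DerivBoundedAt f β w) (hg : DerivBoundedAt g γ w)
    (ha : |f w| ≤ a) (hb : |g w| ≤ b) :
    DerivBoundedAt (fun u => f u * g u) (fun v => a * γ v + b * β v) w :=
  ⟨hf.1.fun_mul hg.1, fun v => by
    rw [fderiv_fun_mul hf.1 hg.1]
    simp only [_root_.add_apply, _root_.smul_apply, smul_eq_mul]
    refine (abs_add_le _ _).trans ?_
    rw [abs_mul, abs_mul]
    exact add_le_add (mul_le_mul ha (hg.2 v) (abs_nonneg _) ((abs_nonneg _).trans ha))
      (mul_le_mul hb (hf.2 v) (abs_nonneg _) ((abs_nonneg _).trans hb))⟩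

lemma comp {φ : ℝ → ℝ} {K : ℝ} (hf : DerivBoundedAt f β w) (hφ : DifferentiableAt ℝ φ (f w))
    (hK : |deriv φ (f w)| ≤ K) : DerivBoundedAt (fun u => φ (f u)) (fun v => K * β v) w :=
  ⟨DifferentiableAt.comp w hφ hf.1, fun v => by
    have h := hφ.hasDerivAt.comp_hasFDerivAt w hf.1.hasFDerivAt
    change |fderiv ℝ (φ ∘ f) w v| ≤ K * β v
    rw [h.fderiv, _root_.smul_apply, smul_eq_mul, abs_mul]
    exact mul_le_mul hK (hf.2 v) (abs_nonneg _) ((abs_nonneg _).trans hK)⟩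

lemma sum {ι : Type*} [Fintype ι] {f : ι → E → ℝ} {β : ι → E → ℝ}
    (h : ∀ i, DerivBoundedAt (f i) (β i) w) :
    DerivBoundedAt (fun u => ∑ i, f i u) (fun v => ∑ i, β i v) w :=
  ⟨DifferentiableAt.fun_sum fun i _ => (h i).1, fun v => by
    rw [fderiv_fun_sum fun i _ => (h i).1, _root_.sum_apply]
    exact (Finset.abs_sum_le_sum_abs _ _).trans (Finset.sum_le_sum fun i _ => (h i).2 v)⟩

lemma const_mul_sq {c k R : ℝ} (hf : DerivBoundedAt f β w) (hc : |c| ≤ k) (hR : |f w| ≤ R) :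
    DerivBoundedAt (fun u => c * f u ^ 2) (fun v => 2 * k * R * β v) w := by
  have h := (hf.mul hf hR hR).const_mul c
  simp only [← pow_two] at h
  refine h.mono fun v => ?_
  have : 0 ≤ R * β v := mul_nonneg ((abs_nonneg _).trans hR) (hf.nonneg v)
  linarith [mul_le_mul_of_nonneg_right hc this]

lemma euclidean_apply {ι : Type*} [Fintype ι] (w : EuclideanSpace ℝ ι) (i : ι) :
    DerivBoundedAt (fun u : EuclideanSpace ℝ ι => u i) (fun v => |v i|) w :=
  have h : HasFDerivAt (fun u : EuclideanSpace ℝ ι => u i) (EuclideanSpace.proj (𝕜 := ℝ) i) w :=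
    PiLp.hasFDerivAt_apply 2 w i
  ⟨h.differentiableAt, fun v => by simp [h.fderiv]⟩

lemma abs_gradient_apply_le {ι : Type*} [Fintype ι] [DecidableEq ι] {f : EuclideanSpace ℝ ι → ℝ}
    {β : EuclideanSpace ℝ ι → ℝ} {w : EuclideanSpace ℝ ι} (hf : DerivBoundedAt f β w) (i : ι) :
    |gradient f w i| ≤ β (EuclideanSpace.single i 1) := by
  have h : fderiv ℝ f w (EuclideanSpace.single i 1) = gradient f w i := by
    rw [← inner_gradient_left, EuclideanSpace.inner_single_right]
    simp
  exact h ▸ hf.2 _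

lemma dotProduct_mulVec {ι : Type*} [Fintype ι] {M : Matrix ι ι ℝ} {ρ V : ℝ} {y : E → ι → ℝ}
    {η : ι → E → ℝ} (hrow : ∀ i, ∑ j, |M i j| ≤ ρ) (hcol : ∀ j, ∑ i, |M i j| ≤ ρ)
    (hV : ∀ i, |y w i| ≤ V) (hy : ∀ i, DerivBoundedAt (fun u => y u i) (η i) w) :
    DerivBoundedAt (fun u => y u ⬝ᵥ M *ᵥ y u) (fun v => 2 * ρ * V * ∑ i, η i v) w := by
  have hM : ∀ i, DerivBoundedAt (fun u => (M *ᵥ y u) i) (fun v => ∑ j, |M i j| * η j v) w :=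
    fun i => sum fun j => (hy j).const_mul (M i j)
  have hMV : ∀ i, |(M *ᵥ y w) i| ≤ ρ * V := fun i => calc
    |∑ j, M i j * y w j| ≤ ∑ j, |M i j| * V := by
      refine (Finset.abs_sum_le_sum_abs _ _).trans (Finset.sum_le_sum fun j _ => ?_)
      rw [abs_mul]
      exact mul_le_mul_of_nonneg_left (hV j) (abs_nonneg _)
    _ = (∑ j, |M i j|) * V := (Finset.sum_mul ..).symm
    _ ≤ ρ * V := mul_le_mul_of_nonneg_right (hrow i) ((abs_nonneg _).trans (hV i))
  refine (sum fun i => (hy i).mul (hM i) (hV i) (hMV i)).mono fun v => ?_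
  calc ∑ i, (V * ∑ j, |M i j| * η j v + ρ * V * η i v)
      = ∑ j, (V * ((∑ i, |M i j|) * η j v) + ρ * V * η j v) := by
        simp only [Finset.sum_add_distrib, ← Finset.mul_sum, Finset.sum_mul]
        rw [Finset.sum_comm]
    _ ≤ ∑ j, (V * (ρ * η j v) + ρ * V * η j v) := by
        gcongr with j
        exacts [(abs_nonneg _).trans (hV j), (hy j).nonneg v, hcol j]
    _ = 2 * ρ * V * ∑ j, η j v := by
        rw [Finset.mul_sum]
        exact Finset.sum_congr rfl fun j _ => by ring

end DerivBoundedAt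

end DerivBounds

section LaplacianMatrices

variable {ι : Type*} [Fintype ι] [DecidableEq ι] {A : Matrix ι ι ℝ} {α : ℝ}

lemma sum_abs_erase_eq_diag {i : ι} (hrow : ∑ j, A i j = 0) (hoff : ∀ j, j ≠ i → A i j ≤ 0) :
    ∑ j ∈ Finset.univ.erase i, |A i j| = A i i := by
  rw [← Finset.add_sum_erase _ _ (Finset.mem_univ i)] at hrow
  rw [Finset.sum_congr rfl fun j hj => abs_of_nonpos (hoff j (Finset.ne_of_mem_erase hj)),
    Finset.sum_neg_distrib]
  linarith

lemma sum_abs_erase_smul_one_add (i : ι) :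
    ∑ j ∈ Finset.univ.erase i, |(α • (1 : Matrix ι ι ℝ) + A) i j| =
      ∑ j ∈ Finset.univ.erase i, |A i j| :=
  Finset.sum_congr rfl fun j hj => by simp [(Finset.ne_of_mem_erase hj).symm]

lemma sum_abs_smul_one_add_eq (hα : 0 ≤ α) {i : ι} (hrow : ∑ j, A i j = 0)
    (hoff : ∀ j, j ≠ i → A i j ≤ 0) :
    ∑ j, |(α • (1 : Matrix ι ι ℝ) + A) i j| = α + 2 * A i i := by
  have hdiag := sum_abs_erase_eq_diag hrow hoff
  have hnonneg : 0 ≤ A i i := hdiag ▸ Finset.sum_nonneg fun _ _ => abs_nonneg _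
  rw [← Finset.add_sum_erase _ _ (Finset.mem_univ i), sum_abs_erase_smul_one_add, hdiag,
    Matrix.add_apply, Matrix.smul_apply, Matrix.one_apply_eq, smul_eq_mul, mul_one,
    abs_of_nonneg (add_nonneg hα hnonneg)]
  ring

lemma isUnit_det_smul_one_add (hα : 0 < α) (hrow : ∀ i, ∑ j, A i j = 0)
    (hoff : ∀ i j, j ≠ i → A i j ≤ 0) : IsUnit (α • (1 : Matrix ι ι ℝ) + A).det := by
  refine isUnit_iff_ne_zero.2 (det_ne_zero_of_sum_row_lt_diag fun i => ?_)
  have hdiag := sum_abs_erase_eq_diag (hrow i) (hoff i)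
  have hsum := sum_abs_smul_one_add_eq hα.le (hrow i) (hoff i)
  rw [← Finset.add_sum_erase _ _ (Finset.mem_univ i)] at hsum
  simp only [Real.norm_eq_abs]
  linarith [sum_abs_erase_smul_one_add (α := α) (A := A) i]

end LaplacianMatrices

section TriA

variable {n : ℕ}

lemma sum_ite_val_eq_mul (m : ℕ) (c : ℝ) (y : ℕ → ℝ) :
    ∑ j : Fin n, (if (j : ℕ) = m then c else 0) * y j = if m < n then c * y m else 0 := by
  rw [Fin.sum_univ_eq_sum_range fun j => (if j = m then c else 0) * y j]
  simp

lemma triA_apply_eq_ite_sub (i j : Fin n) : triA n i j =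
    (if (j : ℕ) = i then (if (i : ℕ) = 0 ∨ (i : ℕ) = n - 1 then 1 else 2) else 0)
      - (if (j : ℕ) = i + 1 then 1 else 0) - (if (j : ℕ) + 1 = i then 1 else 0) := by
  simp only [triA, Matrix.of_apply, Fin.ext_iff]
  split_ifs <;> first | omega | norm_num

lemma triA_mulVec_apply (hn : 2 ≤ n) (y : ℕ → ℝ) (i : Fin n) :
    (triA n *ᵥ fun k : Fin n => y k) i =
      (if 0 < (i : ℕ) then y i - y (i - 1) else 0)
        + (if (i : ℕ) + 1 < n then y i - y (i + 1) else 0) := by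
  have hi := i.isLt
  have hpred : ∀ j : Fin n, (if (j : ℕ) + 1 = i then (1 : ℝ) else 0) =
      if (j : ℕ) = i - 1 then (if 0 < (i : ℕ) then 1 else 0) else 0 := fun j => by
    split_ifs <;> first | rfl | omega
  simp only [mulVec, dotProduct, triA_apply_eq_ite_sub, hpred, sub_mul, Finset.sum_sub_distrib,
    sum_ite_val_eq_mul]
  split_ifs <;> first | omega | ring

lemma sum_triA (hn : 2 ≤ n) (i : Fin n) : ∑ j, triA n i j = 0 := by
  simpa [mulVec, dotProduct] using triA_mulVec_apply hn (fun _ => 1) i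

lemma triA_diag_le_two (i : Fin n) : triA n i i ≤ 2 := by
  simp only [triA, Matrix.of_apply, if_true]
  split_ifs <;> norm_num

lemma triA_off_diag_nonpos (i j : Fin n) (h : j ≠ i) : triA n i j ≤ 0 := by
  simp only [triA, Matrix.of_apply, if_neg h.symm]
  split_ifs <;> norm_num

lemma triA_isSymm : (triA n).IsSymm := Matrix.IsSymm.ext fun i j => by
  simp only [triA, Matrix.of_apply, Fin.ext_iff]
  split_ifs <;> first | omega | norm_num

lemma sum_abs_smul_one_add_triA_le (hn : 2 ≤ n) {α : ℝ} (hα : 0 ≤ α) (i : Fin n) :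
    ∑ j, |(α • (1 : Matrix (Fin n) (Fin n) ℝ) + triA n) i j| ≤ α + 4 := by
  linarith [sum_abs_smul_one_add_eq hα (sum_triA hn i) (triA_off_diag_nonpos i), triA_diag_le_two i]

lemma isUnit_det_smul_one_add_triA (hn : 2 ≤ n) {α : ℝ} (hα : 0 < α) :
    IsUnit (α • (1 : Matrix (Fin n) (Fin n) ℝ) + triA n).det :=
  isUnit_det_smul_one_add hα (sum_triA hn) triA_off_diag_nonpos

end TriA

section TransferSequence

variable {α : ℝ} {n : ℕ}

/-- The solution of the three-term recurrence `-w (k + 2) + (2 + α) * w (k + 1) - w k = 0` started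
with the Neumann condition `(1 + α) * w 0 = w 1`. Read backwards from the last index, it is
proportional to the first column of `Bmat n α`. -/
def transferSeq (α : ℝ) : ℕ → ℝ
  | 0 => 1
  | 1 => 1 + α
  | k + 2 => (2 + α) * transferSeq α (k + 1) - transferSeq α k

lemma transferSeq_succ_sub (α : ℝ) (k : ℕ) :
    transferSeq α (k + 1) - transferSeq α k = α * ∑ j ∈ Finset.range (k + 1), transferSeq α j := by
  induction k with
  | zero => simp [transferSeq]
  | succ k ih =>
    rw [Finset.sum_range_succ, mul_add, ← ih, transferSeq]
    ring

lemma one_le_transferSeq (hα : 0 ≤ α) (k : ℕ) : 1 ≤ transferSeq α k := by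
  induction k using Nat.strong_induction_on with
  | _ k ih =>
    obtain _ | k := k
    · exact le_rfl
    · have hsum : 0 ≤ ∑ j ∈ Finset.range (k + 1), transferSeq α j :=
        Finset.sum_nonneg fun j hj => zero_le_one.trans (ih j (Finset.mem_range.1 hj))
      linarith [ih k k.lt_succ_self, transferSeq_succ_sub α k, mul_nonneg hα hsum]

lemma transferSeq_monotone (hα : 0 ≤ α) : Monotone (transferSeq α) :=
  monotone_nat_of_le_succ fun k => sub_nonneg.1 <| transferSeq_succ_sub α k ▸
    mul_nonneg hα (Finset.sum_nonneg fun j _ => zero_le_one.trans (one_le_transferSeq hα j))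

lemma transferSeq_lt_succ (hα : 0 < α) (k : ℕ) : transferSeq α k < transferSeq α (k + 1) :=
  sub_pos.1 <| transferSeq_succ_sub α k ▸ mul_pos hα (Finset.sum_pos
    (fun j _ => zero_lt_one.trans_le (one_le_transferSeq hα.le j)) Finset.nonempty_range_add_one)

lemma transferSeq_succ_sub_le (hα : 0 ≤ α) (k : ℕ) :
    transferSeq α (k + 1) - transferSeq α k ≤ α * ((k + 1) * transferSeq α k) := by
  rw [transferSeq_succ_sub]
  refine mul_le_mul_of_nonneg_left ?_ hα
  simpa using Finset.sum_le_card_nsmul (Finset.range (k + 1)) (transferSeq α) (transferSeq α k)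
    fun j hj => transferSeq_monotone hα (Finset.mem_range_succ_iff.1 hj)

lemma transferSeq_le (hα : 0 ≤ α) {k : ℕ} (hk : α * (k * (k + 1)) ≤ 1) :
    transferSeq α k ≤ 1 + α * (k * (k + 1)) := by
  induction k with
  | zero => simp [transferSeq]
  | succ k ih =>
    push_cast at hk ⊢
    have hαk : 0 ≤ α * ((k : ℝ) + 1) := by positivity
    have hprev := ih (by linarith)
    have hle_two : transferSeq α k ≤ 2 := by linarith
    calc transferSeq α (k + 1)
        ≤ transferSeq α k + α * ((k + 1) * transferSeq α k) := by
          linarith [transferSeq_succ_sub_le hα k]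
      _ ≤ 1 + α * (k * (k + 1)) + α * ((k + 1) * 2) := by gcongr
      _ = 1 + α * ((k + 1) * (k + 1 + 1)) := by ring

lemma smul_one_add_triA_mulVec_transferSeq (hn : 2 ≤ n) (α : ℝ) :
    (α • (1 : Matrix (Fin n) (Fin n) ℝ) + triA n) *ᵥ
        (fun k : Fin n => transferSeq α (n - 1 - k)) =
      Pi.single ⟨0, by omega⟩ (transferSeq α n - transferSeq α (n - 1)) := by
  ext i
  have hi := i.isLt
  rw [add_mulVec, Pi.add_apply, triA_mulVec_apply hn fun k => transferSeq α (n - 1 - k),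
    smul_mulVec, one_mulVec, Pi.smul_apply, smul_eq_mul, Pi.single_apply]
  simp only [Fin.ext_iff]
  obtain hfirst | hpos := Nat.eq_zero_or_pos i
  · obtain ⟨m, rfl⟩ : ∃ m, n = m + 2 := ⟨n - 2, by omega⟩
    have hcur : m + 2 - 1 - 0 = m + 1 := by omega
    have hnext : m + 2 - 1 - (0 + 1) = m := by omega
    rw [hfirst, hcur, hnext, if_neg (lt_irrefl 0), if_pos (by omega), if_pos rfl, transferSeq]
    simp only [Nat.add_one_sub_one]
    ring
  obtain hlast | hlt : (i : ℕ) + 1 = n ∨ (i : ℕ) + 1 < n := by omega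
  · have hcur : n - 1 - i = 0 := by omega
    have hpred : n - 1 - (i - 1) = 1 := by omega
    rw [hcur, hpred, if_pos hpos, if_neg hlast.not_lt, if_neg hpos.ne', transferSeq, transferSeq]
    ring
  · obtain ⟨q, hq⟩ : ∃ q, n - 1 - (i + 1) = q := ⟨_, rfl⟩
    have hcur : n - 1 - i = q + 1 := by omega
    have hpred : n - 1 - (i - 1) = q + 2 := by omega
    rw [hcur, hpred, hq, if_pos hpos, if_pos hlt, if_neg hpos.ne', transferSeq]
    ring

lemma Bmat_apply_zero (hn : 2 ≤ n) (hα : 0 < α) (i : Fin n) :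
    Bmat n α i ⟨0, by omega⟩ =
      transferSeq α (n - 1 - i) / (transferSeq α n - transferSeq α (n - 1)) := by
  have hflux : 0 < transferSeq α n - transferSeq α (n - 1) := by
    obtain ⟨m, rfl⟩ : ∃ m, n = m + 1 := ⟨n - 1, by omega⟩
    exact sub_pos.2 (transferSeq_lt_succ hα m)
  have hcol := congrArg (Bmat n α *ᵥ ·) (smul_one_add_triA_mulVec_transferSeq hn α)
  simp only [Bmat, mulVec_mulVec, nonsing_inv_mul _ (isUnit_det_smul_one_add_triA hn hα),
    one_mulVec] at hcol
  rw [eq_div_iff hflux.ne']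
  simpa [Bmat] using (congrFun hcol i).symm

/-- Here `C = 12 n s` and `C * (a2 - a1) = 12 * (1 - w)`, where `w` is the entry of `transferSeq` at
`n - 1` and `s` its next increment; `n ^ 2 * α = 1` forces `w ≤ 2` and `s ≤ 2 / n`. -/
lemma abs_coefficients_le (hn : 2 ≤ n) {a1 a2 C c1 c2 : ℝ}
    (ha1 : a1 = Bmat n ((n : ℝ) ^ 2)⁻¹ ⟨0, by omega⟩ ⟨0, by omega⟩ / n)
    (ha2 : a2 = Bmat n ((n : ℝ) ^ 2)⁻¹ ⟨n - 1, by omega⟩ ⟨0, by omega⟩ / n)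
    (hC : C = 12 / a2) (hc1 : c1 = C * (a2 - a1) / 2) (hc2 : c2 = C * (a2 - a1) / 8) :
    |C| ≤ 24 ∧ |c1| ≤ 6 ∧ |c2| ≤ 6 := by
  obtain ⟨m, rfl⟩ : ∃ m, n = m + 1 := ⟨n - 1, by omega⟩
  have hN : (0 : ℝ) < (m + 1 : ℕ) := by positivity
  have hα : 0 < (((m + 1 : ℕ) : ℝ) ^ 2)⁻¹ := by positivity
  have hαN : (((m + 1 : ℕ) : ℝ) ^ 2)⁻¹ * (m + 1 : ℕ) * (m + 1 : ℕ) = 1 := by field_simp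
  rw [Bmat_apply_zero hn hα] at ha1 ha2
  generalize (((m + 1 : ℕ) : ℝ) ^ 2)⁻¹ = α at *
  push_cast at hαN
  have hmN : α * (m * (m + 1)) ≤ 1 := by linarith [mul_nonneg hα.le m.cast_add_one_pos.le]
  have hw1 := one_le_transferSeq hα.le m
  have hw2 : transferSeq α m ≤ 2 := by linarith [transferSeq_le hα.le hmN]
  have hs := sub_pos.2 (transferSeq_lt_succ hα m)
  have hs2 := transferSeq_succ_sub_le hα.le m
  simp only [Nat.add_sub_cancel, Nat.sub_zero, Nat.sub_self, transferSeq.eq_1] at ha1 ha2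
  generalize transferSeq α (m + 1) - transferSeq α m = s at *
  generalize transferSeq α m = w at *
  have hsN : (m + 1 : ℕ) * s ≤ 2 := by
    push_cast
    calc (m + 1 : ℝ) * s ≤ (m + 1) * (α * ((m + 1) * w)) := by gcongr
      _ = w := by linear_combination w * hαN
      _ ≤ 2 := hw2
  have hC' : C = 12 * ((m + 1 : ℕ) * s) := by rw [hC, ha2]; field_simp
  have hdiff : C * (a2 - a1) = 12 * (1 - w) := by rw [hC', ha1, ha2]; field_simp
  have hsN0 : 0 < (m + 1 : ℕ) * s := mul_pos hN hs
  rw [hc1, hc2, hdiff, hC']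
  refine ⟨?_, ?_, ?_⟩ <;> rw [abs_le] <;> constructor <;> linarith

end TransferSequence

section HardInstance

variable {E : Type*} [NormedAddCommGroup E] [NormedSpace ℝ E] {n : ℕ} {x z ξ ζ : E → ℝ} {w : E}

namespace DerivBoundedAt

lemma Psi_comp (hz : DerivBoundedAt z ζ w) : DerivBoundedAt (fun u => Psi (z u)) (12 * ζ ·) w :=
  hz.comp (differentiable_Psi _) (abs_deriv_Psi_le _)

lemma Phi_comp (hx : DerivBoundedAt x ξ w) : DerivBoundedAt (fun u => Phi (x u)) (2 * ξ ·) w :=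
  hx.comp (hasDerivAt_Phi _).differentiableAt (abs_deriv_Phi_le _)

lemma Psi_mul_Phi (hx : DerivBoundedAt x ξ w) (hz : DerivBoundedAt z ζ w) :
    DerivBoundedAt (fun u => Psi (z u) * Phi (x u)) (fun v => 60 * (ξ v + ζ v)) w :=
  (hz.Psi_comp.mul hx.Phi_comp (abs_Psi_le _) (abs_Phi_le _)).mono fun v => by
    linarith [hx.nonneg v]

lemma neg_Psi_one_mul_Phi (hx : DerivBoundedAt x ξ w) :
    DerivBoundedAt (fun u => -Psi 1 * Phi (x u)) (6 * ξ ·) w :=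
  (hx.Phi_comp.const_mul (-Psi 1)).mono fun v => by
    rw [abs_neg]
    nlinarith [hx.nonneg v, abs_Psi_le 1]

lemma Psi_mul_Phi_neg_sub (hx : DerivBoundedAt x ξ w) (hz : DerivBoundedAt z ζ w) :
    DerivBoundedAt (fun u => Psi (-z u) * Phi (-x u) - Psi (z u) * Phi (x u))
      (fun v => 120 * (ξ v + ζ v)) w :=
  ((hx.neg.Psi_mul_Phi hz.neg).sub (hx.Psi_mul_Phi hz)).mono fun v => by linarith

end DerivBoundedAt

lemma bvec_dotProduct (hn : 2 ≤ n) (a b : ℝ) (y : Fin n → ℝ) :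
    bvec n a b ⬝ᵥ y = a * y ⟨0, by omega⟩ - 1 / 2 * (b * y ⟨n - 1, by omega⟩) := by
  have hsplit : bvec n a b =
      Pi.single ⟨0, by omega⟩ a + Pi.single ⟨n - 1, by omega⟩ (-(1 / 2) * b) := by
    ext k
    simp only [bvec, Pi.add_apply, Pi.single_apply, Fin.ext_iff]
    split_ifs <;> first | omega | simp
  rw [hsplit, add_dotProduct, single_dotProduct, single_dotProduct]
  ring

namespace DerivBoundedAt

variable {R S V : ℝ} {y : E → Fin n → ℝ} {η : Fin n → E → ℝ}

lemma bvec_dotProduct (hn : 2 ≤ n) (hx : DerivBoundedAt x ξ w) (hz : DerivBoundedAt z ζ w)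
    (hy : ∀ k, DerivBoundedAt (fun u => y u k) (η k) w)
    (hxR : |x w| ≤ R) (hzR : |z w| ≤ R) (hyV : ∀ k, |y w k| ≤ V) :
    DerivBoundedAt (fun u => bvec n (x u) (z u) ⬝ᵥ y u)
      (fun v => V * (ξ v + ζ v) + 2 * R * ∑ k, η k v) w := by
  have hR : 0 ≤ R := (abs_nonneg _).trans hxR
  have hV : 0 ≤ V := (abs_nonneg _).trans (hyV ⟨0, by omega⟩)
  have hη (k : Fin n) (v : E) : R * η k v ≤ R * ∑ k, η k v :=
    mul_le_mul_of_nonneg_left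
      (Finset.single_le_sum (fun k _ => (hy k).nonneg v) (Finset.mem_univ k)) hR
  simp only [_root_.bvec_dotProduct hn]
  refine ((hx.mul (hy _) hxR (hyV _)).sub
    ((hz.mul (hy _) hzR (hyV _)).const_mul (1 / 2))).mono fun v => ?_
  rw [abs_of_pos one_half_pos]
  linarith [hη ⟨0, by omega⟩ v, hη ⟨n - 1, by omega⟩ v, mul_nonneg hV (hz.nonneg v),
    mul_nonneg hR ((hy ⟨n - 1, by omega⟩).nonneg v)]

lemma hsg (hn : 2 ≤ n) {C K : ℝ} (hC : |C| ≤ K) (hx : DerivBoundedAt x ξ w)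
    (hz : DerivBoundedAt z ζ w) (hy : ∀ k, DerivBoundedAt (fun u => y u k) (η k) w)
    (hxR : |x w| ≤ R) (hzR : |z w| ≤ R) (hyS : ∀ k, |y w k| ≤ n * S) :
    DerivBoundedAt (fun u => hsg n C (x u) (z u) (y u))
      (fun v => K * (5 * S + 2 * R) * (ξ v + ζ v + ∑ k, η k v)) w := by
  have hN : (1 : ℝ) ≤ n := by exact_mod_cast one_le_two.trans hn
  have hα : ((n : ℝ) ^ 2)⁻¹ ≤ 1 := inv_le_one_of_one_le₀ (one_le_pow₀ hN)
  have hS : 0 ≤ S := nonneg_of_mul_nonneg_right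
    ((abs_nonneg _).trans (hyS ⟨0, by omega⟩)) (zero_lt_one.trans_le hN)
  have hR : 0 ≤ R := (abs_nonneg _).trans hxR
  have hrow (i : Fin n) :
      ∑ j, |(((n : ℝ) ^ 2)⁻¹ • (1 : Matrix (Fin n) (Fin n) ℝ) + triA n) i j| ≤ 5 := by
    linarith [sum_abs_smul_one_add_triA_le hn (inv_nonneg.2 (sq_nonneg (n : ℝ))) i]
  have hsymm : (((n : ℝ) ^ 2)⁻¹ • (1 : Matrix (Fin n) (Fin n) ℝ) + triA n).IsSymm :=
    (Matrix.isSymm_one.smul _).add triA_isSymm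
  have hquad := dotProduct_mulVec hrow
    (fun j => by simpa only [hsymm.apply] using hrow j) hyS hy
  refine (((hquad.const_mul (-(1 / 2))).add (hx.bvec_dotProduct hn hz hy hxR hzR hyS)).const_mul
    (C / n)).mono fun v => ?_
  have hp : 0 ≤ ξ v + ζ v := add_nonneg (hx.nonneg v) (hz.nonneg v)
  have hq : 0 ≤ ∑ k, η k v := Finset.sum_nonneg fun k _ => (hy k).nonneg v
  generalize ξ v + ζ v = p at hp ⊢
  generalize ∑ k, η k v = q at hq ⊢
  rw [abs_div, Nat.abs_cast, abs_neg, abs_of_pos (one_half_pos (α := ℝ))]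
  calc |C| / n * (1 / 2 * (2 * 5 * (n * S) * q) + (n * S * p + 2 * R * q))
      ≤ K / n * (n * ((5 * S + 2 * R) * (p + q))) := by
        gcongr
        · exact div_nonneg ((abs_nonneg _).trans hC) n.cast_nonneg
        · nlinarith [mul_nonneg hR hq, mul_nonneg hS hp, mul_nonneg hR hp]
    _ = K * (5 * S + 2 * R) * (p + q) := by field_simp

end DerivBoundedAt

section Blocks

variable {ι κ μ : Type*} [Fintype ι] [Fintype κ] [Fintype μ] {σ : κ → ι}

lemma sum_abs_blocks_le (hσ : Function.Injective σ) (v : ι ⊕ (κ ⊕ κ × μ) → ℝ) :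
    ∑ j, (|v (.inl (σ j))| + |v (.inr (.inl j))| + ∑ k, |v (.inr (.inr (j, k)))|) ≤
      ∑ i, |v i| := by
  have hx : ∑ j, |v (.inl (σ j))| ≤ ∑ i, |v (.inl i)| :=
    (Finset.sum_map Finset.univ ⟨σ, hσ⟩ fun i => |v (.inl i)|).symm.trans_le
      (Finset.sum_le_univ_sum_of_nonneg fun i => abs_nonneg _)
  rw [Finset.sum_add_distrib, Finset.sum_add_distrib, Fintype.sum_sum_type,
    Fintype.sum_sum_type, Fintype.sum_prod_type, ← add_assoc]
  gcongr

lemma DerivBoundedAt.sum_blocks (hσ : Function.Injective σ)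
    {f : κ → EuclideanSpace ℝ (ι ⊕ (κ ⊕ κ × μ)) → ℝ} {K : ℝ} (hK : 0 ≤ K)
    {w : EuclideanSpace ℝ (ι ⊕ (κ ⊕ κ × μ))}
    (hf : ∀ j, DerivBoundedAt (f j) (fun v => K * (|v (.inl (σ j))| + |v (.inr (.inl j))| +
      ∑ k, |v (.inr (.inr (j, k)))|)) w) :
    DerivBoundedAt (fun u => ∑ j, f j u) (fun v => K * ∑ i, |v i|) w :=
  (sum hf).mono fun v => by
    rw [← Finset.mul_sum]
    exact mul_le_mul_of_nonneg_left (sum_abs_blocks_le hσ v) hK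

end Blocks

theorem derivBoundedAt_fbarSgE {T : ℕ} (hn : 2 ≤ n) (hT : 2 ≤ T) {C c1 c2 K k R S : ℝ}
    (hC : |C| ≤ K) (hc1 : |c1| ≤ k) (hc2 : |c2| ≤ k)
    {w : EuclideanSpace ℝ (Fin T ⊕ (Fin (T - 1) ⊕ Fin (T - 1) × Fin n))}
    (hx : ∀ i, |w (.inl i)| ≤ R) (hz : ∀ j, |w (.inr (.inl j))| ≤ R)
    (hy : ∀ j k, |w (.inr (.inr (j, k)))| ≤ n * S) :
    DerivBoundedAt (fbarSgE n T (by omega) hT C c1 c2)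
      (fun v => (126 + K * (5 * S + 2 * R) + 2 * k * R) * ∑ i, |v i|) w := by
  let cur (j : Fin (T - 1)) : Fin T := ⟨j, by omega⟩
  let next (j : Fin (T - 1)) : Fin T := ⟨j + 1, by omega⟩
  have hcur : Function.Injective cur := fun i j h => by simpa [cur, Fin.ext_iff] using h
  have hnext : Function.Injective next := fun i j h => by simpa [next, Fin.ext_iff] using h
  have coord := DerivBoundedAt.euclidean_apply w
  have hR : 0 ≤ R := (abs_nonneg _).trans (hx ⟨0, by omega⟩)
  have hS : 0 ≤ S := nonneg_of_mul_nonneg_right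
    ((abs_nonneg _).trans (hy ⟨0, by omega⟩ ⟨0, by omega⟩)) (Nat.cast_pos.2 (by omega))
  have hK : 0 ≤ K := (abs_nonneg _).trans hC
  have hk : 0 ≤ k := (abs_nonneg _).trans hc1
  have hy_nonneg (v : EuclideanSpace ℝ (Fin T ⊕ (Fin (T - 1) ⊕ Fin (T - 1) × Fin n)))
      (j : Fin (T - 1)) : 0 ≤ ∑ k, |v (.inr (.inr (j, k)))| :=
    Finset.sum_nonneg fun k _ => abs_nonneg _
  have hfirst := (coord (.inl ⟨0, by omega⟩)).neg_Psi_one_mul_Phi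
  have hPsiPhi := DerivBoundedAt.sum_blocks (K := 120) hnext (by norm_num) fun j =>
    ((coord (.inl (next j))).Psi_mul_Phi_neg_sub (coord (.inr (.inl j)))).mono fun v => by
      linarith [hy_nonneg v j]
  have hhsg := DerivBoundedAt.sum_blocks (K := K * (5 * S + 2 * R)) hcur (by positivity) fun j =>
    .hsg hn hC (coord (.inl (cur j))) (coord (.inr (.inl j)))
      (fun k => coord (.inr (.inr (j, k)))) (hx _) (hz j) (hy j)
  have hsq := DerivBoundedAt.sum_blocks (K := 2 * k * R) hcur (by positivity) fun j =>
    (((coord (.inl (cur j))).const_mul_sq hc1 (hx _)).add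
      ((coord (.inr (.inl j))).const_mul_sq hc2 (hz j))).mono fun v => by
      linarith [mul_nonneg (mul_nonneg hk hR) (hy_nonneg v j)]
  refine (((hfirst.add hPsiPhi).add hhsg).add hsq).mono fun v => ?_
  have hx0 : |v (.inl ⟨0, by omega⟩)| ≤ ∑ i, |v i| :=
    Finset.single_le_sum (f := fun i => |v i|) (fun i _ => abs_nonneg _) (Finset.mem_univ _)
  linarith

theorem stmt_13_general {T : ℕ} (hn : 2 ≤ n) (hT : 2 ≤ T) {a1 a2 C c1 c2 R S : ℝ}
    (ha1 : a1 = Bmat n ((n : ℝ) ^ 2)⁻¹ ⟨0, by omega⟩ ⟨0, by omega⟩ / n)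
    (ha2 : a2 = Bmat n ((n : ℝ) ^ 2)⁻¹ ⟨n - 1, by omega⟩ ⟨0, by omega⟩ / n)
    (hC : C = 12 / a2) (hc1 : c1 = C * (a2 - a1) / 2) (hc2 : c2 = C * (a2 - a1) / 8)
    {w : EuclideanSpace ℝ (Fin T ⊕ (Fin (T - 1) ⊕ Fin (T - 1) × Fin n))}
    (hx : ∀ i, |w (.inl i)| ≤ R) (hz : ∀ j, |w (.inr (.inl j))| ≤ R)
    (hy : ∀ j k, |w (.inr (.inr (j, k)))| ≤ n * S)
    (idx : Fin T ⊕ (Fin (T - 1) ⊕ Fin (T - 1) × Fin n)) :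
    |gradient (fbarSgE n T (by omega) hT C c1 c2) w idx| ≤ 126 + 60 * R + 120 * S := by
  obtain ⟨hC24, hc1_6, hc2_6⟩ := abs_coefficients_le hn ha1 ha2 hC hc1 hc2
  have hbound := derivBoundedAt_fbarSgE hn hT hC24 hc1_6 hc2_6 hx hz hy
  calc |gradient (fbarSgE n T (by omega) hT C c1 c2) w idx|
      ≤ 126 + 24 * (5 * S + 2 * R) + 2 * 6 * R := by
        simpa [Pi.single_apply, apply_ite abs] using hbound.abs_gradient_apply_le idx
    _ = 126 + 60 * R + 120 * S := by ring

end HardInstance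

/-- with `R₁ ≥ 2`, `R₂ ≥ 30 R₁` fixed, there is a constant `G > 0`
independent of `n` and `T` bounding `‖∇f̄^{sg}‖_∞` on the hypercube where
`‖x‖_∞, ‖z‖_∞ ≤ R₁` and `‖ȳ^{(i)}‖_∞ ≤ n R₂`. -/
theorem stmt_13 (R1 R2 : ℝ) (hR1 : 2 ≤ R1) (hR2 : 30 * R1 ≤ R2) :
    ∃ G : ℝ, 0 < G ∧
      ∀ (n T : ℕ) (hn : 10 ≤ n) (hT : 2 ≤ T) (a1 a2 C c1 c2 : ℝ),
        a1 = Bmat n (((n : ℝ) ^ 2)⁻¹) ⟨0, by omega⟩ ⟨0, by omega⟩ / n →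
        a2 = Bmat n (((n : ℝ) ^ 2)⁻¹) ⟨n - 1, by omega⟩ ⟨0, by omega⟩ / n →
        C = 12 / a2 → c1 = C * (a2 - a1) / 2 → c2 = C * (a2 - a1) / 8 →
        ∀ w : EuclideanSpace ℝ (Fin T ⊕ (Fin (T - 1) ⊕ Fin (T - 1) × Fin n)),
          (∀ i : Fin T, |w (Sum.inl i)| ≤ R1) →
          (∀ j : Fin (T - 1), |w (Sum.inr (Sum.inl j))| ≤ R1) →
          (∀ (j : Fin (T - 1)) (k : Fin n), |w (Sum.inr (Sum.inr (j, k)))| ≤ (n : ℝ) * R2) →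
          ∀ idx, |gradient (fbarSgE n T (by omega) hT C c1 c2) w idx| ≤ G := by
  exact ⟨126 + 60 * R1 + 120 * R2, by linarith, fun n T hn hT a1 a2 C c1 c2 ha1 ha2 hC hc1 hc2 w
    hx hz hy => stmt_13_general (by omega) hT ha1 ha2 hC hc1 hc2 hx hz hy⟩
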